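/- Let d ≥ 1 and k ≥ 2 be integers. There exists a constant C = C(k, d) such that for every 1 ≤ i < j ≤ k, every w ∈ (ℤ^d)^k with ‖w_i − w_j‖ = 1, every s ≥ 0, and every w̄ ∈ {δ^{i,j}w, δ^{j,i}w, σ^{i,j}w}, one has Σ_{y ∈ (ℤ^d)^k} |p_s^{rw}(w̄, y) − p_s^{rw}(w, y)| ≤ C / (√s + 1). -/

import Mathlib

open scoped Classical

noncomputable section

namespace SSEPPaper

/-- Configurations of `k` labelled particles on `ℤ^d`. -/
abbrev Conf (d k : ℕ) := Fin k → Fin d → ℤ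

/-- Euclidean norm of an integer vector in `ℤ^d`. -/
def vnorm {d : ℕ} (v : Fin d → ℤ) : ℝ := Real.sqrt (∑ j, ((v j : ℝ)) ^ 2)

/-- Euclidean norm on `(ℝ^d)^k` of an integer configuration. -/
def cnorm {d k : ℕ} (x : Conf d k) : ℝ := Real.sqrt (∑ i, ∑ j, ((x i j : ℝ)) ^ 2)

/-- The set `𝕊^k` of configurations with pairwise distinct particle positions. -/
def SSet (d k : ℕ) : Set (Conf d k) := {x | ∀ i j : Fin k, i ≠ j → x i ≠ x j}

/-- Swap of the coordinates `i` and `j` of a configuration, i.e. `σ^{i,j}x`. -/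
def cswap {d k : ℕ} (i j : Fin k) (x : Conf d k) : Conf d k := x ∘ Equiv.swap i j

/-- `δ^{i,j}w`: the configuration which agrees with `w` except that its `j`-th coordinate
is replaced by `w i`. -/
def cdelta {d k : ℕ} (i j : Fin k) (w : Conf d k) : Conf d k := Function.update w j (w i)

/-- Kronecker delta function at `y`. -/
def deltaFn {α : Type*} (y : α) : α → ℝ := fun x => if x = y then 1 else 0

/-- Generator of the labelled exclusion process, extended to all of `(ℤ^d)^k`. -/
def Lexc {d k : ℕ} (f : Conf d k → ℝ) : Conf d k → ℝ := fun x =>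
  (∑' y : Conf d k, if cnorm (y - x) = 1 ∧ y ∈ SSet d k then f y - f x else 0) +
    ∑ i : Fin k, ∑ j : Fin k,
      if i < j ∧ vnorm (x i - x j) = 1 ∧ x ∈ SSet d k then f (cswap i j x) - f x else 0

/-- Generator of `k` independent simple random walks on `ℤ^d`. -/
def Lrw {d k : ℕ} (f : Conf d k → ℝ) : Conf d k → ℝ := fun x =>
  ∑' z : Conf d k, if cnorm (z - x) = 1 then f z - f x else 0

/-- Generator (discrete Laplacian) of a single simple random walk on `ℤ^d`. -/
def Lap {d : ℕ} (f : (Fin d → ℤ) → ℝ) : (Fin d → ℤ) → ℝ := fun x =>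
  ∑' y : Fin d → ℤ, if vnorm (y - x) = 1 then f y - f x else 0

/-- Transition probabilities `p_t^ℓ(x,y) = (e^{tL^ℓ} δ_y)(x)` of the labelled exclusion
process, given by the exponential power series of the generator. -/
def ptl {d k : ℕ} (t : ℝ) (x y : Conf d k) : ℝ :=
  ∑' n : ℕ, t ^ n / n.factorial * ((Lexc (d := d) (k := k))^[n] (deltaFn y)) x

/-- Transition probabilities `p_t^{rw}(x,y) = (e^{tL^{rw}} δ_y)(x)` of `k` independent
simple random walks on `ℤ^d`. -/
def ptrw {d k : ℕ} (t : ℝ) (x y : Conf d k) : ℝ :=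
  ∑' n : ℕ, t ^ n / n.factorial * ((Lrw (d := d) (k := k))^[n] (deltaFn y)) x

/-- Transition probabilities `p_t(x,y) = (e^{tΔ} δ_y)(x)` of a single continuous-time
simple random walk on `ℤ^d`. -/
def pt1 {d : ℕ} (t : ℝ) (x y : Fin d → ℤ) : ℝ :=
  ∑' n : ℕ, t ^ n / n.factorial * ((Lap (d := d))^[n] (deltaFn y)) x

/-- The configuration `e₁₁ = ((1,0,…,0),(0,…,0),…,(0,…,0))`. -/
def e11 (d k : ℕ) : Conf d k := fun i j => if i.val = 0 ∧ j.val = 0 then 1 else 0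

/-!
On `ℓ¹` the shifts `T_u` commute and are contractions, so for each unit step `v` the semigroup
`exp (s ∑ (T_u - 1))` factors as a contraction times `exp (s (T_v - 1))`. The law started one step
`v` further differs by the factor `T_v - 1`, and Stein's identity turns
`exp (s (T_v - 1)) (T_v - 1)` into `𝔼[(N / s - 1) T_v ^ N]` for a Poisson variable `N` of mean `s`.
Its norm is at most `𝔼|N - s| / s ≤ 1 / √s`, since `N` has variance `s`. Replacing `w_j` by a
neighbour is one unit step, and exchanging two neighbouring walkers is two.
-/

section PoissonSeries

open NormedSpace

lemma hasSum_pow_div_factorial (s : ℝ) :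
    HasSum (fun n : ℕ => s ^ n / n.factorial) (Real.exp s) := by
  rw [Real.exp_eq_exp_ℝ]
  exact expSeries_div_hasSum_exp s

/-- Stein's identity `𝔼[N a(N)] = s 𝔼[a(N + 1)]` for a Poisson variable `N` of mean `s`, times
`eˢ`. -/
lemma hasSum_pow_div_factorial_mul_cast_smul {E : Type*} [AddCommGroup E] [Module ℝ E]
    [TopologicalSpace E] [IsTopologicalAddGroup E] [ContinuousConstSMul ℝ E] {s : ℝ} {a : ℕ → E}
    {S : E} (h : HasSum (fun n : ℕ => (s ^ n / n.factorial) • a (n + 1)) S) :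
    HasSum (fun n : ℕ => (s ^ n / n.factorial * n) • a n) (s • S) := by
  rw [← hasSum_nat_add_iff' 1]
  simp only [Finset.range_one, Finset.sum_singleton, Nat.cast_zero, mul_zero, zero_smul, sub_zero]
  refine (h.const_smul s).congr_fun fun n => ?_
  rw [smul_smul, Nat.factorial_succ]
  congr 1
  push_cast
  field_simp
  ring

lemma hasSum_pow_div_factorial_mul_cast (s : ℝ) :
    HasSum (fun n : ℕ => s ^ n / n.factorial * n) (s * Real.exp s) := by
  simpa using hasSum_pow_div_factorial_mul_cast_smul (a := fun _ => (1 : ℝ))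
    (by simpa using hasSum_pow_div_factorial s)

lemma hasSum_pow_div_factorial_mul_cast_sub_sq (s : ℝ) :
    HasSum (fun n : ℕ => s ^ n / n.factorial * (n - s) ^ 2) (s * Real.exp s) := by
  have secondMoment : HasSum (fun n : ℕ => s ^ n / n.factorial * n * n)
      (s * (s * Real.exp s + Real.exp s)) :=
    hasSum_pow_div_factorial_mul_cast_smul (a := fun n => (n : ℝ)) <| by
      simpa [mul_add] using
        (hasSum_pow_div_factorial_mul_cast s).add (hasSum_pow_div_factorial s)
  convert! (secondMoment.sub ((hasSum_pow_div_factorial_mul_cast s).mul_left (2 * s))).add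
    ((hasSum_pow_div_factorial s).mul_left (s ^ 2)) using 1
  · funext n
    ring
  · ring

end PoissonSeries

section CommutingContractions

open NormedSpace

lemma norm_pow_le_one_of_norm_le_one {R : Type*} [NormedRing R] [NormOneClass R] {T : R}
    (hT : ‖T‖ ≤ 1) (n : ℕ) : ‖T ^ n‖ ≤ 1 :=
  (norm_pow_le T n).trans (pow_le_one₀ (norm_nonneg _) hT)

variable {A : Type*} [NormedRing A] [NormedAlgebra ℝ A] [CompleteSpace A]

lemma hasSum_pow_div_factorial_smul_pow (s : ℝ) (T : A) :
    HasSum (fun n : ℕ => (s ^ n / n.factorial) • T ^ n) (exp (s • T)) := by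
  simpa [smul_pow, smul_smul, div_eq_inv_mul] using exp_series_hasSum_exp' (𝕂 := ℝ) (s • T)

lemma exp_smul_add_of_commute {X Y : A} (h : Commute X Y) (s : ℝ) :
    exp (s • (X + Y)) = exp (s • X) * exp (s • Y) := by
  let : NormedAlgebra ℚ A := NormedAlgebra.restrictScalars ℚ ℝ A
  rw [smul_add, exp_add_of_commute ((h.smul_left s).smul_right s)]

lemma exp_smul_sub_one (s : ℝ) (T : A) :
    exp (s • (T - 1)) = Real.exp (-s) • exp (s • T) := by
  rw [sub_eq_neg_add, exp_smul_add_of_commute (Commute.one_left T).neg_left, smul_neg, ← neg_smul,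
    ← Algebra.algebraMap_eq_smul_one, ← algebraMap_exp_comm, ← Algebra.smul_def, Real.exp_eq_exp_ℝ]

lemma hasSum_pow_div_factorial_mul_cast_sub_smul_pow (s : ℝ) (T : A) :
    HasSum (fun n : ℕ => (s ^ n / n.factorial * (n - s)) • T ^ n)
      (s • (exp (s • T) * (T - 1))) := by
  have hExp := hasSum_pow_div_factorial_smul_pow s T
  have hDeriv : HasSum (fun n : ℕ => (s ^ n / n.factorial * n) • T ^ n)
      (s • (exp (s • T) * T)) :=
    hasSum_pow_div_factorial_mul_cast_smul <| by
      simpa [pow_succ] using hExp.mul_right T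
  convert! hDeriv.sub (hExp.const_smul s) using 1
  · funext n
    module
  · rw [mul_sub, mul_one, smul_sub]

lemma exp_smul_sum_sub_one_erase {ι : Type*} [DecidableEq ι] {F : Finset ι} {T : ι → A}
    (s : ℝ) (hcomm : (F : Set ι).Pairwise fun i j => Commute (T i) (T j)) {i : ι} (hi : i ∈ F) :
    exp (s • ∑ j ∈ F, (T j - 1)) =
      exp (s • ∑ j ∈ F.erase i, (T j - 1)) * exp (s • (T i - 1)) := by
  rw [← Finset.sum_erase_add F _ hi]
  refine exp_smul_add_of_commute (Commute.sum_left _ _ _ fun j hj => ?_) s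
  obtain ⟨hji, hj⟩ := Finset.mem_erase.mp hj
  exact ((hcomm hj hi hji).sub_left (Commute.one_left _)).sub_right (Commute.one_right _)

variable [NormOneClass A] {s : ℝ}

section SingleContraction

variable {T : A}

lemma norm_exp_smul_sub_one_le_one (hs : 0 ≤ s) (hT : ‖T‖ ≤ 1) : ‖exp (s • (T - 1))‖ ≤ 1 := by
  have norm_exp_smul_le : ‖exp (s • T)‖ ≤ Real.exp s := by
    refine (hasSum_pow_div_factorial_smul_pow s T).norm_le_of_bounded
      (hasSum_pow_div_factorial s) fun n => ?_
    rw [norm_smul, Real.norm_of_nonneg (by positivity)]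
    exact mul_le_of_le_one_right (by positivity) (norm_pow_le_one_of_norm_le_one hT n)
  calc ‖exp (s • (T - 1))‖ = Real.exp (-s) * ‖exp (s • T)‖ := by
        rw [exp_smul_sub_one, norm_smul, Real.norm_of_nonneg (Real.exp_pos _).le]
    _ ≤ Real.exp (-s) * Real.exp s := by gcongr
    _ = 1 := by rw [← Real.exp_add, neg_add_cancel, Real.exp_zero]

lemma norm_exp_smul_mul_sub_one_le (hs : 0 < s) (hT : ‖T‖ ≤ 1) :
    ‖exp (s • T) * (T - 1)‖ ≤ Real.exp s / √s := by
  have hroot : 0 < √s := Real.sqrt_pos.mpr hs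
  have hbound : HasSum
      (fun n : ℕ => s ^ n / n.factorial * (((n - s) ^ 2 / √s + √s) / 2)) (√s * Real.exp s) := by
    convert! (((hasSum_pow_div_factorial_mul_cast_sub_sq s).div_const √s).add
      ((hasSum_pow_div_factorial s).mul_right √s)).div_const 2 using 1
    · funext n
      ring
    · rw [mul_div_right_comm, Real.div_sqrt]
      ring
  have hAMGM (x : ℝ) : |x| ≤ (x ^ 2 / √s + √s) / 2 := by
    have h := two_mul_le_add_sq |x| √s
    rw [sq_abs] at h
    rw [div_add' _ _ _ hroot.ne', div_div, le_div_iff₀ (by positivity)]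
    linarith
  have hscaled : ‖s • (exp (s • T) * (T - 1))‖ ≤ √s * Real.exp s := by
    refine (hasSum_pow_div_factorial_mul_cast_sub_smul_pow s T).norm_le_of_bounded hbound
      fun n => ?_
    rw [norm_smul, norm_mul, Real.norm_of_nonneg (by positivity), Real.norm_eq_abs]
    exact (mul_le_of_le_one_right (by positivity) (norm_pow_le_one_of_norm_le_one hT n)).trans
      (by gcongr; exact hAMGM _)
  rw [norm_smul, Real.norm_of_nonneg hs.le] at hscaled
  calc ‖exp (s • T) * (T - 1)‖ ≤ √s * Real.exp s / s := (le_div_iff₀' hs).mpr hscaled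
    _ = Real.exp s / √s := by rw [mul_div_right_comm, Real.sqrt_div_self, inv_mul_eq_div]

lemma norm_exp_smul_sub_one_mul_sub_one_le (hs : 0 ≤ s) (hT : ‖T‖ ≤ 1) :
    ‖exp (s • (T - 1)) * (T - 1)‖ ≤ 3 / (√s + 1) := by
  rcases le_total √s (1 / 2) with hsmall | hlarge
  · calc ‖exp (s • (T - 1)) * (T - 1)‖ ≤ ‖exp (s • (T - 1))‖ * ‖T - 1‖ := norm_mul_le _ _
      _ ≤ 1 * (1 + 1) := by
          gcongr
          · exact norm_exp_smul_sub_one_le_one hs hT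
          · exact (norm_sub_le _ _).trans (by rw [norm_one]; gcongr)
      _ ≤ 3 / (√s + 1) := by
          rw [le_div_iff₀ (by positivity)]
          linarith
  · have hroot : 0 < √s := by linarith
    calc ‖exp (s • (T - 1)) * (T - 1)‖ = Real.exp (-s) * ‖exp (s • T) * (T - 1)‖ := by
          rw [exp_smul_sub_one, smul_mul_assoc, norm_smul, Real.norm_of_nonneg (Real.exp_pos _).le]
      _ ≤ Real.exp (-s) * (Real.exp s / √s) := by
          gcongr
          exact norm_exp_smul_mul_sub_one_le (Real.sqrt_pos.mp hroot) hT
      _ = 1 / √s := by rw [← mul_div_assoc, ← Real.exp_add, neg_add_cancel, Real.exp_zero]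
      _ ≤ 3 / (√s + 1) := by
          rw [div_le_div_iff₀ hroot (by positivity)]
          linarith

end SingleContraction

variable {ι : Type*} {F : Finset ι} {T : ι → A}

lemma norm_exp_smul_sum_sub_one_le_one (hs : 0 ≤ s)
    (hcomm : (F : Set ι).Pairwise fun i j => Commute (T i) (T j)) (hT : ∀ i ∈ F, ‖T i‖ ≤ 1) :
    ‖exp (s • ∑ i ∈ F, (T i - 1))‖ ≤ 1 := by
  classical
  induction F using Finset.induction_on with
  | empty => simp
  | insert i F hi ih =>
    have hF : ‖exp (s • ∑ j ∈ F, (T j - 1))‖ ≤ 1 :=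
      ih (hcomm.mono (Finset.coe_subset.mpr (Finset.subset_insert i F)))
        fun j hj => hT j (Finset.mem_insert_of_mem hj)
    rw [exp_smul_sum_sub_one_erase s hcomm (Finset.mem_insert_self i F), Finset.erase_insert hi]
    exact (norm_mul_le _ _).trans (mul_le_one₀ hF (norm_nonneg _)
      (norm_exp_smul_sub_one_le_one hs (hT i (Finset.mem_insert_self i F))))

lemma norm_exp_smul_sum_sub_one_mul_sub_one_le (hs : 0 ≤ s)
    (hcomm : (F : Set ι).Pairwise fun i j => Commute (T i) (T j)) (hT : ∀ i ∈ F, ‖T i‖ ≤ 1)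
    {i : ι} (hi : i ∈ F) :
    ‖exp (s • ∑ j ∈ F, (T j - 1)) * (T i - 1)‖ ≤ 3 / (√s + 1) := by
  classical
  have hrest : ‖exp (s • ∑ j ∈ F.erase i, (T j - 1))‖ ≤ 1 :=
    norm_exp_smul_sum_sub_one_le_one hs (hcomm.mono (Finset.coe_subset.mpr (F.erase_subset i)))
      fun j hj => hT j (Finset.mem_of_mem_erase hj)
  calc ‖exp (s • ∑ j ∈ F, (T j - 1)) * (T i - 1)‖
      ≤ ‖exp (s • ∑ j ∈ F.erase i, (T j - 1))‖ * ‖exp (s • (T i - 1)) * (T i - 1)‖ := by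
        rw [exp_smul_sum_sub_one_erase s hcomm hi, mul_assoc]
        exact norm_mul_le _ _
    _ ≤ ‖exp (s • (T i - 1)) * (T i - 1)‖ := mul_le_of_le_one_left (norm_nonneg _) hrest
    _ ≤ 3 / (√s + 1) := norm_exp_smul_sub_one_mul_sub_one_le hs (hT i hi)

end CommutingContractions

section TranslationInvariantWalk

open NormedSpace
open scoped lp

variable {α β E : Type*} [NormedAddCommGroup E]

lemma hasSum_norm_sub_dist (f g : ℓ¹(α, E)) : HasSum (fun y => ‖f y - g y‖) (dist f g) := by
  simpa [dist_eq_norm] using lp.hasSum_norm (by simp) (f - g)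

lemma memℓp_one_comp_equiv (e : α ≃ β) (f : ℓ¹(β, E)) : Memℓp (f ∘ e) 1 :=
  memℓp_gen (e.summable_iff.mpr ((memℓp_gen_iff (by simp)).mp (lp.memℓp f)))

variable {G : Type*} [AddCommGroup G]

/-- The push-forward of a summable function, viewed as a signed measure, under `y ↦ y + u`. -/
def shift (u : G) : ℓ¹(G, ℝ) →ₗᵢ[ℝ] ℓ¹(G, ℝ) where
  toFun f := ⟨f ∘ Equiv.subRight u, memℓp_one_comp_equiv _ f⟩
  map_add' _ _ := rfl
  map_smul' _ _ := rfl
  norm_map' f := by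
    simp only [lp.norm_eq_tsum_rpow (p := 1) (by simp), ENNReal.toReal_one, Real.rpow_one, div_one]
    exact (Equiv.subRight u).tsum_eq fun y => ‖f y‖

lemma shift_apply (u : G) (f : ℓ¹(G, ℝ)) (y : G) : shift u f y = f (y - u) := rfl

lemma commute_shift (u v : G) :
    Commute (shift u).toContinuousLinearMap (shift v).toContinuousLinearMap := by
  ext f y
  simp [shift_apply, sub_right_comm]

/-- The forward generator of the continuous-time random walk on `G` that performs each step
`u ∈ U` at rate one. -/
def walkGenerator (U : Finset G) : ℓ¹(G, ℝ) →L[ℝ] ℓ¹(G, ℝ) :=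
  ∑ u ∈ U, ((shift u).toContinuousLinearMap - 1)

variable [DecidableEq G]

lemma shift_single (u x : G) (a : ℝ) :
    shift u (lp.single 1 x a) = lp.single 1 (x + u) a := by
  ext y
  simp [shift_apply, Pi.single_apply, sub_eq_iff_eq_add]

lemma walkGenerator_single (U : Finset G) (x : G) (a : ℝ) :
    walkGenerator U (lp.single 1 x a) = ∑ u ∈ U, (lp.single 1 (x + u) a - lp.single 1 x a) := by
  simp [walkGenerator, shift_single]

/-- The law at time `s`, as a summable function, of the walk with forward generator
`walkGenerator U` started at `x`. -/
def walkLaw (U : Finset G) (s : ℝ) (x : G) : ℓ¹(G, ℝ) :=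
  exp (s • walkGenerator U) (lp.single 1 x 1)

lemma hasSum_walkLaw_apply (U : Finset G) (s : ℝ) (x y : G) :
    HasSum (fun n : ℕ => s ^ n / n.factorial * (walkGenerator U ^ n) (lp.single 1 x 1) y)
      (walkLaw U s x y) := by
  have hLaw := (ContinuousLinearMap.apply ℝ ℓ¹(G, ℝ) (lp.single 1 x 1)).hasSum
    (hasSum_pow_div_factorial_smul_pow s (walkGenerator U))
  exact (lp.evalCLM ℝ (fun _ : G => ℝ) 1 y).hasSum hLaw

lemma dist_walkLaw_add_le {U : Finset G} {s : ℝ} (hs : 0 ≤ s) {v : G} (hv : v ∈ U) (x : G) :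
    dist (walkLaw U s (x + v)) (walkLaw U s x) ≤ 3 / (√s + 1) := by
  let δ : ℓ¹(G, ℝ) := lp.single 1 x 1
  have hδ : ‖δ‖ = 1 := by simp [δ, lp.norm_single]
  have : Nontrivial ℓ¹(G, ℝ) := ⟨δ, 0, norm_ne_zero_iff.mp (hδ ▸ one_ne_zero)⟩
  calc dist (walkLaw U s (x + v)) (walkLaw U s x)
      = ‖(exp (s • walkGenerator U) * ((shift v).toContinuousLinearMap - 1)) δ‖ := by
        simp [dist_eq_norm, walkLaw, δ, shift_single]
    _ ≤ ‖exp (s • walkGenerator U) * ((shift v).toContinuousLinearMap - 1)‖ := by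
        simpa [hδ] using
          (exp (s • walkGenerator U) * ((shift v).toContinuousLinearMap - 1)).le_opNorm δ
    _ ≤ 3 / (√s + 1) :=
        norm_exp_smul_sum_sub_one_mul_sub_one_le hs (fun u _ u' _ _ => commute_shift u u')
          (fun u _ => (shift u).norm_toContinuousLinearMap_le) hv

end TranslationInvariantWalk

section Lattice

variable {d k : ℕ}

lemma sq_apply_le_one_of_cnorm_eq_one {u : Conf d k} (hu : cnorm u = 1) (i : Fin k) (j : Fin d) :
    u i j ^ 2 ≤ 1 := by
  rw [cnorm, Real.sqrt_eq_one] at hu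
  have hle : (u i j : ℝ) ^ 2 ≤ ∑ i, ∑ j, (u i j : ℝ) ^ 2 :=
    (Finset.single_le_sum (f := fun j => (u i j : ℝ) ^ 2) (fun _ _ => sq_nonneg _)
      (Finset.mem_univ j)).trans
    (Finset.single_le_sum (f := fun i => ∑ j, (u i j : ℝ) ^ 2)
      (fun _ _ => Finset.sum_nonneg fun _ _ => sq_nonneg _) (Finset.mem_univ i))
  exact_mod_cast hu ▸ hle

lemma finite_setOf_cnorm_eq_one (d k : ℕ) : {u : Conf d k | cnorm u = 1}.Finite := by
  refine (Set.finite_Icc (-1 : Conf d k) 1).subset fun u hu => ?_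
  have habs (i : Fin k) (j : Fin d) : -1 ≤ u i j ∧ u i j ≤ 1 :=
    abs_le.mp ((sq_le_one_iff_abs_le_one _).mp (sq_apply_le_one_of_cnorm_eq_one hu i j))
  exact ⟨fun i j => (habs i j).1, fun i j => (habs i j).2⟩

/-- The steps of `k` independent simple random walks on `ℤ^d`: one coordinate of one walker
changes by one. -/
def unitSteps (d k : ℕ) : Finset (Conf d k) := (finite_setOf_cnorm_eq_one d k).toFinset

lemma mem_unitSteps {u : Conf d k} : u ∈ unitSteps d k ↔ cnorm u = 1 := by
  simp [unitSteps]

lemma Lrw_apply (f : Conf d k → ℝ) (x : Conf d k) :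
    Lrw f x = ∑ u ∈ unitSteps d k, (f (x + u) - f x) := by
  rw [Lrw, ← (Equiv.addLeft x).tsum_eq, tsum_eq_sum (s := unitSteps d k)]
  · refine Finset.sum_congr rfl fun u hu => ?_
    simp [mem_unitSteps.mp hu]
  · intro u hu
    simp [mt mem_unitSteps.mpr hu]

-- The backward generator `Lrw` moves the starting point, the forward one moves the law.
lemma iterate_Lrw_deltaFn_apply (n : ℕ) (x y : Conf d k) :
    (Lrw^[n] (deltaFn y)) x = (walkGenerator (unitSteps d k) ^ n) (lp.single 1 x 1) y := by
  induction n generalizing x with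
  | zero => simp [deltaFn, Pi.single_apply, eq_comm]
  | succ n ih =>
    rw [Function.iterate_succ_apply', Lrw_apply, pow_succ, mul_apply_eq_comp,
      walkGenerator_single, map_sum, lp.coeFn_sum, Finset.sum_apply]
    simp only [ih, map_sub, lp.coeFn_sub, Pi.sub_apply]

lemma ptrw_eq_walkLaw (s : ℝ) (x y : Conf d k) : ptrw s x y = walkLaw (unitSteps d k) s x y := by
  simp only [ptrw, iterate_Lrw_deltaFn_apply]
  exact (hasSum_walkLaw_apply _ s x y).tsum_eq

lemma hasSum_abs_ptrw_sub (s : ℝ) (x w : Conf d k) :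
    HasSum (fun y => |ptrw s x y - ptrw s w y|)
      (dist (walkLaw (unitSteps d k) s x) (walkLaw (unitSteps d k) s w)) := by
  simp only [ptrw_eq_walkLaw, ← Real.norm_eq_abs]
  exact hasSum_norm_sub_dist _ _

lemma cnorm_single (j : Fin k) (v : Fin d → ℤ) : cnorm (Pi.single j v : Conf d k) = vnorm v := by
  rw [cnorm, vnorm, Finset.sum_eq_single j]
  · simp
  · intro i _ hij
    simp [hij]
  · simp

lemma vnorm_sub_comm (a b : Fin d → ℤ) : vnorm (a - b) = vnorm (b - a) := by
  simp only [vnorm, Pi.sub_apply, Int.cast_sub, sub_sq_comm]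

lemma cswap_eq_update_cdelta (i j : Fin k) (w : Conf d k) :
    cswap i j w = Function.update (cdelta i j w) i (w j) :=
  Equiv.comp_swap_eq_update i j w

lemma update_eq_add_single {ι M : Type*} [DecidableEq ι] [AddCommGroup M] (w : ι → M) (j : ι)
    (a : M) : Function.update w j a = w + Pi.single j (a - w j) := by
  rw [Pi.update_eq_sub_add_single, Pi.single_sub]
  abel

lemma dist_walkLaw_update_le {s : ℝ} (hs : 0 ≤ s) {w : Conf d k} {j : Fin k} {a : Fin d → ℤ}
    (ha : vnorm (a - w j) = 1) :
    dist (walkLaw (unitSteps d k) s (Function.update w j a)) (walkLaw (unitSteps d k) s w) ≤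
      3 / (√s + 1) := by
  rw [update_eq_add_single]
  exact dist_walkLaw_add_le hs (mem_unitSteps.mpr (by rw [cnorm_single, ha])) w

lemma dist_walkLaw_cswap_le {s : ℝ} (hs : 0 ≤ s) {i j : Fin k} {w : Conf d k}
    (hw : vnorm (w i - w j) = 1) :
    dist (walkLaw (unitSteps d k) s (cswap i j w)) (walkLaw (unitSteps d k) s w) ≤
      6 / (√s + 1) := by
  have hij : i ≠ j := by
    rintro rfl
    simp [vnorm] at hw
  have hback : vnorm (w j - cdelta i j w i) = 1 := by
    rw [cdelta, Function.update_of_ne hij, vnorm_sub_comm, hw]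
  calc dist (walkLaw (unitSteps d k) s (cswap i j w)) (walkLaw (unitSteps d k) s w)
      ≤ 3 / (√s + 1) + 3 / (√s + 1) := by
        rw [cswap_eq_update_cdelta]
        exact (dist_triangle _ _ _).trans
          (add_le_add (dist_walkLaw_update_le hs hback) (dist_walkLaw_update_le hs hw))
    _ = 6 / (√s + 1) := by ring

end Lattice

theorem rw_one_step_total_variation_general {d k : ℕ} {i j : Fin k} {w : Conf d k}
    (hw : vnorm (w i - w j) = 1) {s : ℝ} (hs : 0 ≤ s) {wb : Conf d k}
    (hwb : wb = cdelta i j w ∨ wb = cdelta j i w ∨ wb = cswap i j w) :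
    Summable (fun y : Conf d k => |ptrw s wb y - ptrw s w y|) ∧
      ∑' y : Conf d k, |ptrw s wb y - ptrw s w y| ≤ 6 / (√s + 1) := by
  have hdist : dist (walkLaw (unitSteps d k) s wb) (walkLaw (unitSteps d k) s w) ≤
      6 / (√s + 1) := by
    have three_le_six : 3 / (√s + 1) ≤ 6 / (√s + 1) := by gcongr; norm_num
    rcases hwb with rfl | rfl | rfl
    · exact (dist_walkLaw_update_le hs hw).trans three_le_six
    · exact (dist_walkLaw_update_le hs (vnorm_sub_comm _ _ ▸ hw)).trans three_le_six
    · exact dist_walkLaw_cswap_le hs hw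
  have hsum := hasSum_abs_ptrw_sub s wb w
  exact ⟨hsum.summable, hsum.tsum_eq ▸ hdist⟩

/-- Total variation bound for one-step perturbations of independent random walks: for integers
`d ≥ 1`, `k ≥ 2` there is a constant `C = C(k,d)` such that for every `1 ≤ i < j ≤ k`, every
`w ∈ (ℤ^d)^k` with `‖w_i − w_j‖ = 1`, every `s ≥ 0` and every
`w̄ ∈ {δ^{i,j}w, δ^{j,i}w, σ^{i,j}w}`,
`Σ_{y ∈ (ℤ^d)^k} |p_s^{rw}(w̄,y) − p_s^{rw}(w,y)| ≤ C/(√s+1)`. -/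
theorem rw_one_step_total_variation (d k : ℕ) (hd : 1 ≤ d) (hk : 2 ≤ k) :
    ∃ C : ℝ, 0 < C ∧ ∀ i j : Fin k, i < j → ∀ w : Conf d k, vnorm (w i - w j) = 1 →
      ∀ s : ℝ, 0 ≤ s → ∀ wb : Conf d k,
        (wb = cdelta i j w ∨ wb = cdelta j i w ∨ wb = cswap i j w) →
        Summable (fun y : Conf d k => |ptrw s wb y - ptrw s w y|) ∧
        ∑' y : Conf d k, |ptrw s wb y - ptrw s w y| ≤ C / (Real.sqrt s + 1) := by
  exact ⟨6, by norm_num, fun i j _ w hw s hs wb hwb =>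
    rw_one_step_total_variation_general hw hs hwb⟩

end SSEPPaper
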